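/- For every positive integer n, the supremum of ‖P'‖_{L_∞[−1,1]} / ‖P‖_{L_∞[−1,1]}, taken over all real polynomials P of degree at most n that are not identically zero and satisfy P'(x) ≥ 0 for all x ∈ [−1, 1], equals (n+1)²/4 if n is odd, and equals n(n+2)/4 if n is even. -/

import Mathlib

open Polynomial MeasureTheory

/-- The sup norm of `f` on `[a,b]`. -/
noncomputable def LinfNorm (f : ℝ → ℝ) (a b : ℝ) : ℝ :=
  sSup ((fun x => |f x|) '' Set.Icc a b)

theorem intervalIntegrable_eval (p : ℝ[X]) (a b : ℝ) :
    IntervalIntegrable (fun x => p.eval x) volume a b :=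
  p.continuous.intervalIntegrable a b

theorem integral_eval_mul_derivative (p q : ℝ[X]) :
    ∫ x in (0 : ℝ)..1, (p * derivative q).eval x =
      p.eval 1 * q.eval 1 - p.eval 0 * q.eval 0 -
        ∫ x in (0 : ℝ)..1, (derivative p * q).eval x := by
  simp only [eval_mul]
  exact intervalIntegral.integral_mul_deriv_eq_deriv_mul
    (fun x _ => p.hasDerivAt x) (fun x _ => q.hasDerivAt x)
    (intervalIntegrable_eval _ _ _) (intervalIntegrable_eval _ _ _)

/-- A polynomial vanishing to order `k` at both endpoints has its `k`-th derivative orthogonal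
to all polynomials of degree less than `k`. -/
theorem integral_eval_mul_iterate_derivative_eq_zero {k : ℕ} {G : ℝ[X]}
    (h0 : X ^ k ∣ G) (h1 : (X - 1) ^ k ∣ G) {q : ℝ[X]} (hq : derivative^[k] q = 0) :
    ∫ x in (0 : ℝ)..1, (q * derivative^[k] G).eval x = 0 := by
  have aux : ∀ j ≤ k, ∀ r : ℝ[X], derivative^[j] r = 0 →
      ∫ x in (0 : ℝ)..1, (r * derivative^[j] G).eval x = 0 := by
    intro j
    induction j with
    | zero => intro _ r hr; simp only [Function.iterate_zero, id] at hr; simp [hr]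
    | succ j ih =>
      intro hj r hr
      have e0 : (derivative^[j] G).eval 0 = 0 := by
        obtain ⟨c, hc⟩ := pow_sub_dvd_iterate_derivative_of_pow_dvd j h0
        rw [hc]; simp [show k - j ≠ 0 by omega]
      have e1 : (derivative^[j] G).eval 1 = 0 := by
        obtain ⟨c, hc⟩ := pow_sub_dvd_iterate_derivative_of_pow_dvd j h1
        rw [hc]; simp [show k - j ≠ 0 by omega]
      rw [Function.iterate_succ_apply', integral_eval_mul_derivative, e0, e1,
        ih (by omega) _ (by rwa [Function.iterate_succ_apply] at hr)]
      simp
  exact aux k le_rfl q hq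

theorem eval_one_iterate_derivative (p : ℝ[X]) (i : ℕ) :
    (derivative^[i] p).eval 1 = i.factorial * (taylor 1 p).coeff i := by
  rw [taylor_coeff, ← factorial_smul_hasseDeriv]
  simp

/-- The reproducing kernel of evaluation at `1` for polynomials of degree at most `k` with respect
to the weight `x ^ a` on `[0, 1]`. -/
theorem exists_reproducing_kernel (k a : ℕ) : ∃ Q : ℝ[X], Q.natDegree ≤ k ∧
    Q.eval 1 = ((k : ℝ) + 1) * (k + 1 + a) ∧ ∀ q : ℝ[X], q.natDegree ≤ k →
      ∫ x in (0 : ℝ)..1, (X ^ a * Q * q).eval x = q.eval 1 := by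
  set G : ℝ[X] := X ^ (k + 1 + a) * (X - 1) ^ k with hG
  have hT : taylor 1 G = (X + 1) ^ (k + 1 + a) * X ^ k := by
    simp [hG, taylor_mul, taylor_pow, taylor_X]
  have hk : (derivative^[k] G).eval 1 = k.factorial := by
    rw [eval_one_iterate_derivative, hT, coeff_mul_X_pow']
    simp [coeff_X_add_one_pow]
  have hk1 : (derivative^[k + 1] G).eval 1 = (k + 1).factorial * (k + 1 + a) := by
    rw [eval_one_iterate_derivative, hT, coeff_mul_X_pow']
    simp [coeff_X_add_one_pow]
  have hk0 : (derivative^[k] G).eval 0 = 0 := by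
    obtain ⟨c, hc⟩ := pow_sub_dvd_iterate_derivative_of_pow_dvd (p := G) k
      (Dvd.intro _ rfl : (X : ℝ[X]) ^ (k + 1 + a) ∣ G)
    rw [hc]; simp [show k + 1 + a - k ≠ 0 by omega]
  obtain ⟨R, hR⟩ : X ^ a ∣ derivative^[k + 1] G := by
    have := pow_sub_dvd_iterate_derivative_of_pow_dvd (p := G) (k + 1)
      (Dvd.intro _ rfl : (X : ℝ[X]) ^ (k + 1 + a) ∣ G)
    rwa [Nat.add_sub_cancel_left] at this
  have hf : (k.factorial : ℝ) ≠ 0 := by positivity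
  have hR1 : R.eval 1 = (k + 1).factorial * ((k : ℝ) + 1 + a) := by
    rw [← hk1, hR]; simp
  have hRdeg : R.natDegree ≤ k := by
    by_cases h : R = 0
    · simp [h]
    have h1 : G.natDegree ≤ 2 * k + 1 + a := by
      have : ((X : ℝ[X]) - 1).natDegree ≤ 1 := natDegree_X_sub_C_le 1
      refine (natDegree_mul_le).trans ?_
      have := natDegree_pow_le_of_le k this
      rw [natDegree_X_pow]; omega
    have h2 := natDegree_iterate_derivative G (k + 1)
    rw [hR, natDegree_mul (by simp) h, natDegree_X_pow] at h2
    omega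
  refine ⟨C (k.factorial : ℝ)⁻¹ * R, (natDegree_C_mul_le _ _).trans hRdeg, ?_, fun q hq => ?_⟩
  · rw [eval_C_mul, hR1, Nat.factorial_succ]; push_cast; field_simp
  · have e : ∀ x : ℝ, (X ^ a * (C (k.factorial : ℝ)⁻¹ * R) * q).eval x =
        (k.factorial : ℝ)⁻¹ * (q * derivative^[k + 1] G).eval x := by
      intro x; rw [hR]; simp; ring
    simp_rw [e]
    rw [intervalIntegral.integral_const_mul, Function.iterate_succ_apply',
      integral_eval_mul_derivative, hk, hk0, integral_eval_mul_iterate_derivative_eq_zero]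
    · field_simp; simp
    · exact (pow_dvd_pow _ (by omega)).trans (Dvd.intro _ rfl)
    · exact Dvd.intro_left _ rfl
    · rw [← Function.iterate_succ_apply]
      exact iterate_derivative_eq_zero (by omega)

theorem sq_eval_one_le_integral (k a : ℕ) {q : ℝ[X]} (hq : q.natDegree ≤ k) :
    (q.eval 1) ^ 2 ≤ ((k : ℝ) + 1) * (k + 1 + a) * ∫ x in (0 : ℝ)..1, (X ^ a * q ^ 2).eval x := by
  obtain ⟨Q, hQ, hQ1, hrep⟩ := exists_reproducing_kernel k a
  set c : ℝ := ((k : ℝ) + 1) * (k + 1 + a) with hc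
  have hcpos : 0 < c := by positivity
  have h : 0 ≤ ∫ x in (0 : ℝ)..1, (X ^ a * (C c * q - C (q.eval 1) * Q) ^ 2).eval x := by
    refine intervalIntegral.integral_nonneg zero_le_one fun x hx => ?_
    have := hx.1
    simp only [eval_mul, eval_pow, eval_X]
    positivity
  have e : ∀ x : ℝ, (X ^ a * (C c * q - C (q.eval 1) * Q) ^ 2).eval x =
      c ^ 2 * (X ^ a * q ^ 2).eval x - 2 * c * q.eval 1 * (X ^ a * Q * q).eval x
        + (q.eval 1) ^ 2 * (X ^ a * Q * Q).eval x := by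
    intro x; simp; ring
  simp_rw [e] at h
  rw [intervalIntegral.integral_add, intervalIntegral.integral_sub,
    intervalIntegral.integral_const_mul, intervalIntegral.integral_const_mul,
    intervalIntegral.integral_const_mul, hrep q hq, hrep Q hQ, hQ1] at h
  · have : 0 ≤ c * (c * (∫ x in (0 : ℝ)..1, (X ^ a * q ^ 2).eval x) - (q.eval 1) ^ 2) := by
      linarith
    linarith [nonneg_of_mul_nonneg_right this hcpos]
  all_goals
    apply Continuous.intervalIntegrable
    fun_prop

/-- The cone generated by the polynomials `x ^ i (1 - x) ^ j q ^ 2` of degree at most `m`. -/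
noncomputable def squareCone (m : ℕ) : AddSubmonoid ℝ[X] :=
  AddSubmonoid.closure {p | ∃ (i j : ℕ) (q : ℝ[X]), i + j + 2 * q.natDegree ≤ m ∧
    p = X ^ i * (1 - X) ^ j * q ^ 2}

theorem mem_squareCone {m i j : ℕ} {q : ℝ[X]} (h : i + j + 2 * q.natDegree ≤ m) :
    X ^ i * (1 - X) ^ j * q ^ 2 ∈ squareCone m :=
  AddSubmonoid.subset_closure ⟨i, j, q, h, rfl⟩

theorem mul_mem_squareCone {m m' : ℕ} {h : ℝ[X]}
    (H : ∀ (i j : ℕ) (q : ℝ[X]), i + j + 2 * q.natDegree ≤ m →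
      h * (X ^ i * (1 - X) ^ j * q ^ 2) ∈ squareCone m') {p : ℝ[X]} (hp : p ∈ squareCone m) :
    h * p ∈ squareCone m' := by
  induction hp using AddSubmonoid.closure_induction with
  | mem x hx => obtain ⟨i, j, q, hle, rfl⟩ := hx; exact H i j q hle
  | zero => simp
  | add x y _ _ hx hy => rw [mul_add]; exact add_mem hx hy

theorem linear_mul_mem_squareCone {m : ℕ} {α β : ℝ} (hα : 0 ≤ α) (hβ : 0 ≤ β) {p : ℝ[X]}
    (hp : p ∈ squareCone m) : (C α * X + C β * (1 - X)) * p ∈ squareCone (m + 1) := by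
  refine mul_mem_squareCone (fun i j q h => ?_) hp
  have e : (C α * X + C β * (1 - X)) * (X ^ i * (1 - X) ^ j * q ^ 2) =
      X ^ (i + 1) * (1 - X) ^ j * (C √α * q) ^ 2 + X ^ i * (1 - X) ^ (j + 1) * (C √β * q) ^ 2 := by
    simp only [mul_pow, ← C_pow, Real.sq_sqrt hα, Real.sq_sqrt hβ]; ring
  rw [e]
  have h1 := natDegree_C_mul_le √α q
  have h2 := natDegree_C_mul_le √β q
  exact add_mem (mem_squareCone (by omega)) (mem_squareCone (by omega))

theorem quadratic_mul_mem_squareCone {m : ℕ} (a b : ℝ) {p : ℝ[X]}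
    (hp : p ∈ squareCone m) : ((X - C a) ^ 2 + C b ^ 2) * p ∈ squareCone (m + 2) := by
  refine mul_mem_squareCone (fun i j q h => ?_) hp
  have e : ((X - C a) ^ 2 + C b ^ 2) * (X ^ i * (1 - X) ^ j * q ^ 2) =
      X ^ i * (1 - X) ^ j * ((X - C a) * q) ^ 2 + X ^ i * (1 - X) ^ j * (C b * q) ^ 2 := by
    ring
  rw [e]
  have h1 := natDegree_C_mul_le b q
  have h2 : ((X - C a) * q).natDegree ≤ 1 + q.natDegree :=
    natDegree_mul_le.trans (by rw [natDegree_X_sub_C])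
  exact add_mem (mem_squareCone (by omega)) (mem_squareCone (by omega))

theorem eval_nonneg_of_forall_ne {p : ℝ[X]} (c : ℝ)
    (h : ∀ x ∈ Set.Icc (0 : ℝ) 1, x ≠ c → 0 ≤ p.eval x) {x : ℝ} (hx : x ∈ Set.Icc (0 : ℝ) 1) :
    0 ≤ p.eval x := by
  by_contra! hneg
  have hopen : IsOpen {y : ℝ | p.eval y < 0} := isOpen_lt p.continuous continuous_const
  have hcl : x ∈ closure (Set.Ioo (0 : ℝ) 1 \ {c}) := by
    have : Dense ({c}ᶜ : Set ℝ) := dense_compl_singleton c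
    rw [← closure_Ioo (zero_ne_one (α := ℝ))] at hx
    exact closure_minimal (this.open_subset_closure_inter isOpen_Ioo) isClosed_closure hx
  obtain ⟨y, hy, hy1, hy2⟩ := mem_closure_iff.1 hcl _ hopen hneg
  exact absurd (h y ⟨hy1.1.le, hy1.2.le⟩ hy2) (not_le.2 hy)

/-- A polynomial nonnegative on `[0, 1]` lies in the cone of its degree. -/
theorem mem_squareCone_of_nonneg : ∀ (m : ℕ) (p : ℝ[X]), p.natDegree = m →
    (∀ x ∈ Set.Icc (0 : ℝ) 1, 0 ≤ p.eval x) → p ∈ squareCone m := by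
  intro m
  induction m using Nat.strong_induction_on with
  | _ m ih =>
    intro p hpm hp
    rcases Nat.eq_zero_or_pos m with rfl | hm
    · rw [eq_C_of_natDegree_eq_zero hpm] at hp ⊢
      have h0 : 0 ≤ p.coeff 0 := by simpa using hp 0 (by simp)
      have := mem_squareCone (m := 0) (i := 0) (j := 0) (q := C √(p.coeff 0)) (by simp)
      simpa [← C_pow, Real.sq_sqrt h0] using this
    have hp0 : p ≠ 0 := by rintro rfl; simp at hpm; omega
    obtain ⟨z, hz⟩ := IsAlgClosed.exists_aeval_eq_zero ℂ p
      (by rw [degree_eq_natDegree hp0]; exact_mod_cast (by omega : p.natDegree ≠ 0))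
    by_cases him : z.im = 0
    · have hroot : p.IsRoot z.re := by
        have : z = algebraMap ℝ ℂ z.re := by apply Complex.ext <;> simp [him]
        rw [this, aeval_algebraMap_apply] at hz
        simpa using hz
      set c := z.re
      obtain ⟨g, hg⟩ := dvd_iff_isRoot.2 hroot
      have hg0 : g ≠ 0 := by rintro rfl; exact hp0 (by simpa using hg)
      have hdeg : 1 + g.natDegree = m := by
        rw [← hpm, hg, natDegree_mul (X_sub_C_ne_zero c) hg0, natDegree_X_sub_C]
      have hev : ∀ x ∈ Set.Icc (0 : ℝ) 1, 0 ≤ (x - c) * g.eval x := fun x hx => by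
        simpa [hg] using hp x hx
      rcases le_or_gt c 0 with hc | hc
      · have hgn : ∀ x ∈ Set.Icc (0 : ℝ) 1, 0 ≤ g.eval x := fun x hx => by
          refine eval_nonneg_of_forall_ne c (fun y hy hne => ?_) hx
          have : c < y := lt_of_le_of_ne (hc.trans hy.1) hne.symm
          exact nonneg_of_mul_nonneg_right (hev y hy) (by linarith)
        have := linear_mul_mem_squareCone (α := 1 - c) (β := -c) (by linarith) (by linarith)
          (ih g.natDegree (by omega) g rfl hgn)
        rw [show g.natDegree + 1 = m by omega] at this
        convert this using 1
        rw [hg]; simp only [map_sub, map_neg, map_one]; ring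
      rcases le_or_gt 1 c with hc1 | hc1
      · have hgn : ∀ x ∈ Set.Icc (0 : ℝ) 1, 0 ≤ (-g).eval x := fun x hx => by
          refine eval_nonneg_of_forall_ne c (fun y hy hne => ?_) hx
          have : y < c := lt_of_le_of_ne (hy.2.trans hc1) hne
          refine nonneg_of_mul_nonneg_right (a := c - y) ?_ (by linarith)
          have := hev y hy
          rw [eval_neg]; linarith
        have := linear_mul_mem_squareCone (α := c - 1) (β := c) (by linarith) (by linarith)
          (ih g.natDegree (by omega) (-g) (natDegree_neg g) hgn)
        rw [show g.natDegree + 1 = m by omega] at this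
        convert this using 1
        rw [hg]; simp only [map_sub, map_one]; ring
      have hgc : g.IsRoot c := by
        have hcont : Filter.Tendsto (fun x => g.eval x) (nhds c) (nhds (g.eval c)) :=
          g.continuous.tendsto c
        refine le_antisymm ?_ ?_
        · refine le_of_tendsto (hcont.mono_left (nhdsWithin_le_nhds (s := Set.Iio c))) ?_
          filter_upwards [Ioo_mem_nhdsLT hc] with y hy
          have := hev y ⟨hy.1.le, by linarith [hy.2]⟩
          by_contra! hn
          nlinarith [mul_pos (sub_pos.2 hy.2) hn]
        · refine ge_of_tendsto (hcont.mono_left (nhdsWithin_le_nhds (s := Set.Ioi c))) ?_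
          filter_upwards [Ioo_mem_nhdsGT hc1] with y hy
          exact nonneg_of_mul_nonneg_right (hev y ⟨by linarith [hy.1], hy.2.le⟩)
            (sub_pos.2 hy.1)
      obtain ⟨f, hf⟩ := dvd_iff_isRoot.2 hgc
      have hf0 : f ≠ 0 := by rintro rfl; exact hg0 (by simpa using hf)
      have hdeg' : 1 + f.natDegree = g.natDegree := by
        rw [hf, natDegree_mul (X_sub_C_ne_zero c) hf0, natDegree_X_sub_C]
      have hfn : ∀ x ∈ Set.Icc (0 : ℝ) 1, 0 ≤ f.eval x := fun x hx => by
        refine eval_nonneg_of_forall_ne c (fun y hy hne => ?_) hx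
        have hpos : 0 < (y - c) ^ 2 := by have := sub_ne_zero.2 hne; positivity
        refine nonneg_of_mul_nonneg_right (a := (y - c) ^ 2) ?_ hpos
        have := hev y hy
        rw [hf, eval_mul, eval_sub, eval_X, eval_C] at this
        linarith
      have := quadratic_mul_mem_squareCone c 0 (ih f.natDegree (by omega) f rfl hfn)
      rw [show f.natDegree + 2 = m by omega] at this
      convert this using 1
      rw [hg, hf]; simp only [map_zero]; ring
    · obtain ⟨g, hg⟩ := quadratic_dvd_of_aeval_eq_zero_im_ne_zero p hz him
      have e : (X ^ 2 - C (2 * z.re) * X + C (‖z‖ ^ 2) : ℝ[X]) =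
          (X - C z.re) ^ 2 + C z.im ^ 2 := by
        rw [Complex.sq_norm, Complex.normSq_apply]
        simp only [map_mul, map_add]
        rw [show (C (2 : ℝ) : ℝ[X]) = 2 from rfl]; ring
      rw [e] at hg
      have hg0 : g ≠ 0 := by rintro rfl; exact hp0 (by simpa using hg)
      have hquad : ((X - C z.re) ^ 2 + C z.im ^ 2 : ℝ[X]).natDegree = 2 := by
        rw [← C_pow, natDegree_add_C, natDegree_pow, natDegree_X_sub_C]
      have hdeg : 2 + g.natDegree = m := by
        rw [← hpm, hg, natDegree_mul (by intro h; simp [h] at hquad) hg0, hquad]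
      have hgn : ∀ x ∈ Set.Icc (0 : ℝ) 1, 0 ≤ g.eval x := fun x hx => by
        have := hp x hx
        rw [hg] at this
        simp only [eval_mul, eval_add, eval_pow, eval_sub, eval_X, eval_C] at this
        exact nonneg_of_mul_nonneg_right this (by positivity)
      have := quadratic_mul_mem_squareCone z.re z.im (ih g.natDegree (by omega) g rfl hgn)
      rw [show g.natDegree + 2 = m by omega] at this
      rwa [hg]

/-- The extremal constant in the endpoint inequality on `[0, 1]` for degree `m`. -/
noncomputable def endpointConst (m : ℕ) : ℝ :=
  (((m / 2 : ℕ) : ℝ) + 1) * ((m / 2 : ℕ) + 1 + (m % 2 : ℕ))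

theorem endpointConst_pos (m : ℕ) : 0 < endpointConst m := by
  unfold endpointConst; positivity

theorem eval_one_le_of_mem_squareCone {m : ℕ} {p : ℝ[X]} (hp : p ∈ squareCone m) :
    p.eval 1 ≤ endpointConst m * ∫ x in (0 : ℝ)..1, p.eval x := by
  induction hp using AddSubmonoid.closure_induction with
  | zero => simp
  | add x y _ _ hx hy =>
    simp only [eval_add]
    rw [intervalIntegral.integral_add (intervalIntegrable_eval _ _ _)
      (intervalIntegrable_eval _ _ _), mul_add]
    exact add_le_add hx hy
  | mem p hp =>
    obtain ⟨i, j, q, h, rfl⟩ := hp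
    have hnonneg : ∀ x ∈ Set.Icc (0 : ℝ) 1, 0 ≤ (X ^ i * (1 - X) ^ j * q ^ 2).eval x := by
      intro x hx
      have h1 := hx.1
      have h2 : 0 ≤ 1 - x := sub_nonneg.2 hx.2
      simp only [eval_mul, eval_pow, eval_X, eval_sub, eval_one]
      positivity
    have hint := intervalIntegral.integral_nonneg (μ := volume) zero_le_one hnonneg
    rcases Nat.eq_zero_or_pos j with rfl | hj
    · have e : X ^ i * (1 - X) ^ 0 * q ^ 2 = X ^ (i % 2) * (X ^ (i / 2) * q) ^ 2 := by
        rw [mul_pow, ← pow_mul, ← mul_assoc, ← pow_add, pow_zero, mul_one,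
          show i % 2 + i / 2 * 2 = i by omega]
      rw [e] at hint ⊢
      have hd : (X ^ (i / 2) * q).natDegree ≤ (m - i % 2) / 2 := by
        have := natDegree_mul_le (p := (X : ℝ[X]) ^ (i / 2)) (q := q)
        rw [natDegree_X_pow] at this
        omega
      have key := sq_eval_one_le_integral ((m - i % 2) / 2) (i % 2) hd
      refine le_trans (by simp) (key.trans (mul_le_mul_of_nonneg_right ?_ hint))
      unfold endpointConst
      have h1 : (m - i % 2) / 2 + 1 ≤ m / 2 + 1 := by omega
      have h2 : (m - i % 2) / 2 + 1 + i % 2 ≤ m / 2 + 1 + m % 2 := by omega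
      exact_mod_cast Nat.mul_le_mul h1 h2
    · have : (X ^ i * (1 - X) ^ j * q ^ 2).eval (1 : ℝ) = 0 := by simp [hj.ne']
      rw [this]
      exact mul_nonneg (endpointConst_pos m).le hint

theorem squareCone_mono {m m' : ℕ} (h : m ≤ m') : squareCone m ≤ squareCone m' :=
  AddSubmonoid.closure_mono fun _ ⟨i, j, q, hle, e⟩ => ⟨i, j, q, hle.trans h, e⟩

theorem eval_one_le_integral {m : ℕ} {p : ℝ[X]} (hm : p.natDegree ≤ m)
    (hp : ∀ x ∈ Set.Icc (0 : ℝ) 1, 0 ≤ p.eval x) :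
    p.eval 1 ≤ endpointConst m * ∫ x in (0 : ℝ)..1, p.eval x :=
  eval_one_le_of_mem_squareCone (squareCone_mono hm (mem_squareCone_of_nonneg _ p rfl hp))

/-- The endpoint inequality transported to the segment from `b` to `x`, in either order. -/
theorem sub_mul_eval_derivative_le {m : ℕ} {P : ℝ[X]} {b x : ℝ} (hm : P.derivative.natDegree ≤ m)
    (hP : ∀ y ∈ Set.uIcc b x, 0 ≤ P.derivative.eval y) :
    |x - b| * P.derivative.eval x ≤ endpointConst m * |P.eval x - P.eval b| := by
  set l : ℝ[X] := C (x - b) * X + C b with hl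
  have hl0 : l.eval 0 = b := by simp [hl]
  have hl1 : l.eval 1 = x := by simp [hl]
  have hldeg : l.natDegree ≤ 1 := natDegree_linear_le
  have hnn : ∀ t ∈ Set.Icc (0 : ℝ) 1, 0 ≤ (P.derivative.comp l).eval t := by
    intro t ht
    rw [eval_comp]
    apply hP
    rw [← segment_eq_uIcc, segment_eq_image']
    exact ⟨t, ht, by simp [hl]; ring⟩
  have key := eval_one_le_integral (m := m) (p := P.derivative.comp l)
    (by rw [natDegree_comp]; nlinarith [Nat.mul_le_mul hm hldeg]) hnn
  have hint : (x - b) * ∫ t in (0 : ℝ)..1, (P.derivative.comp l).eval t =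
      P.eval x - P.eval b := by
    rw [← intervalIntegral.integral_const_mul]
    have : ∀ t ∈ Set.uIcc (0 : ℝ) 1, HasDerivAt (fun t => (P.comp l).eval t)
        ((x - b) * (P.derivative.comp l).eval t) t := by
      intro t _
      have h := (P.comp l).hasDerivAt t
      have e : (P.comp l).derivative.eval t = (x - b) * (P.derivative.comp l).eval t := by
        rw [derivative_comp]; simp [hl]
      rwa [e] at h
    rw [intervalIntegral.integral_eq_sub_of_hasDerivAt this
      (Continuous.intervalIntegrable (by fun_prop) _ _)]
    simp [eval_comp, hl0, hl1]
  have hI := intervalIntegral.integral_nonneg (μ := volume) zero_le_one hnn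
  rw [eval_comp, hl1] at key
  rw [← hint, abs_mul, abs_of_nonneg hI]
  calc _ ≤ _ := mul_le_mul_of_nonneg_left key (abs_nonneg (x - b))
    _ = _ := by ring

theorem monotoneOn_eval {P : ℝ[X]} {a b : ℝ}
    (hP : ∀ x ∈ Set.Icc a b, 0 ≤ P.derivative.eval x) :
    MonotoneOn (fun x => P.eval x) (Set.Icc a b) := by
  refine monotoneOn_of_deriv_nonneg (convex_Icc a b) P.continuous.continuousOn
    P.differentiable.differentiableOn fun x hx => ?_
  rw [Polynomial.deriv]
  exact hP x (interior_subset hx)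

theorem two_mul_eval_derivative_le {m : ℕ} {P : ℝ[X]} (hm : P.derivative.natDegree ≤ m)
    (hP : ∀ x ∈ Set.Icc (-1 : ℝ) 1, 0 ≤ P.derivative.eval x) {x : ℝ}
    (hx : x ∈ Set.Icc (-1 : ℝ) 1) :
    2 * P.derivative.eval x ≤ endpointConst m * (P.eval 1 - P.eval (-1)) := by
  have hmono := monotoneOn_eval hP
  have hl : (-1 : ℝ) ∈ Set.Icc (-1 : ℝ) 1 := by simp
  have hr : (1 : ℝ) ∈ Set.Icc (-1 : ℝ) 1 := by simp
  have h1 := sub_mul_eval_derivative_le (b := -1) (x := x) hm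
    fun y hy => hP y (Set.uIcc_subset_Icc hl hx hy)
  have h2 := sub_mul_eval_derivative_le (b := 1) (x := x) hm
    fun y hy => hP y (Set.uIcc_subset_Icc hr hx hy)
  have m1 : P.eval (-1) ≤ P.eval x := hmono hl hx hx.1
  have m2 : P.eval x ≤ P.eval 1 := hmono hx hr hx.2
  rw [abs_of_nonneg (by linarith [hx.1]), abs_of_nonneg (by linarith)] at h1
  rw [abs_of_nonpos (by linarith [hx.2]), abs_of_nonpos (by linarith)] at h2
  linarith

theorem le_LinfNorm (P : ℝ[X]) {a b x : ℝ} (hx : x ∈ Set.Icc a b) :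
    |P.eval x| ≤ LinfNorm (fun x => P.eval x) a b :=
  le_csSup (isCompact_Icc.bddAbove_image P.continuous.abs.continuousOn)
    (Set.mem_image_of_mem (fun x => |P.eval x|) hx)

theorem LinfNorm_le {f : ℝ → ℝ} {a b M : ℝ} (hab : a ≤ b) (h : ∀ x ∈ Set.Icc a b, |f x| ≤ M) :
    LinfNorm f a b ≤ M := by
  refine csSup_le ((Set.nonempty_Icc.2 hab).image _) ?_
  rintro _ ⟨x, hx, rfl⟩
  exact h x hx

theorem LinfNorm_derivative_le {m : ℕ} {P : ℝ[X]} (hm : P.derivative.natDegree ≤ m)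
    (hP : ∀ x ∈ Set.Icc (-1 : ℝ) 1, 0 ≤ P.derivative.eval x) :
    LinfNorm (fun x => P.derivative.eval x) (-1) 1 ≤
      endpointConst m * LinfNorm (fun x => P.eval x) (-1) 1 := by
  refine LinfNorm_le (by norm_num) fun x hx => ?_
  rw [abs_of_nonneg (hP x hx)]
  have h := two_mul_eval_derivative_le hm hP hx
  have h1 := (le_abs_self _).trans (le_LinfNorm P (a := -1) (b := 1) (x := 1) (by simp))
  have h2 := (neg_le_abs _).trans (le_LinfNorm P (a := -1) (b := 1) (x := -1) (by simp))
  have := mul_le_mul_of_nonneg_left (add_le_add h1 h2) (endpointConst_pos m).le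
  linarith

theorem exists_derivative_eq (p : ℝ[X]) :
    ∃ P : ℝ[X], P.derivative = p ∧ P.natDegree ≤ p.natDegree + 1 := by
  refine ⟨∑ i ∈ Finset.range (p.natDegree + 1), monomial (i + 1) (p.coeff i / (i + 1)), ?_, ?_⟩
  · conv_rhs => rw [p.as_sum_range]
    rw [derivative_sum]
    refine Finset.sum_congr rfl fun i _ => ?_
    rw [derivative_monomial]
    congr 1
    push_cast
    field_simp
  · refine natDegree_sum_le_of_forall_le _ _ fun i hi => (natDegree_monomial_le _).trans ?_
    have := Finset.mem_range.1 hi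
    omega

theorem exists_extremal (m : ℕ) : ∃ P : ℝ[X], P.natDegree ≤ m + 1 ∧
    (∀ x ∈ Set.Icc (-1 : ℝ) 1, 0 ≤ P.derivative.eval x) ∧
    P.derivative.eval 1 = endpointConst m ^ 2 ∧
    P.eval 1 = endpointConst m ∧ P.eval (-1) = -endpointConst m := by
  obtain ⟨Q, hQ, hQ1, hrep⟩ := exists_reproducing_kernel (m / 2) (m % 2)
  change Q.eval 1 = endpointConst m at hQ1
  set p : ℝ[X] := X ^ (m % 2) * Q * Q with hp
  obtain ⟨F, hF, hFdeg⟩ := exists_derivative_eq p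
  have hpdeg : p.natDegree ≤ m := by
    have h1 := natDegree_mul_le (p := X ^ (m % 2) * Q) (q := Q)
    have h2 := natDegree_mul_le (p := X ^ (m % 2)) (q := Q)
    rw [natDegree_X_pow] at h2
    rw [← hp] at h1
    omega
  have hint : F.eval 1 - F.eval 0 = endpointConst m := by
    rw [← hQ1, ← hrep Q hQ, ← hp, ← hF]
    exact (intervalIntegral.integral_eq_sub_of_hasDerivAt (fun x _ => F.hasDerivAt x)
      (intervalIntegrable_eval _ _ _)).symm
  set l : ℝ[X] := C 2⁻¹ * X + C 2⁻¹ with hl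
  have hl1 : l.eval 1 = 1 := by simp [hl]; norm_num
  have hl0 : l.eval (-1) = 0 := by simp [hl]
  have hld : l.derivative = C 2⁻¹ := by simp [hl]
  have hldeg : l.natDegree ≤ 1 := natDegree_linear_le
  set P : ℝ[X] := C 2 * F.comp l - C (F.eval 1 + F.eval 0) with hP
  have hder : P.derivative = p.comp l := by
    rw [hP, derivative_sub, derivative_C_mul, derivative_comp, hF, hld, derivative_C, sub_zero,
      ← mul_assoc, ← C_mul]
    norm_num
  refine ⟨P, ?_, ?_, ?_, ?_, ?_⟩
  · rw [hP, natDegree_sub_C]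
    refine (natDegree_C_mul_le _ _).trans ?_
    rw [natDegree_comp]
    nlinarith [Nat.mul_le_mul (hFdeg.trans (Nat.succ_le_succ hpdeg)) hldeg]
  · intro x hx
    have : 0 ≤ l.eval x := by
      simp only [hl, eval_add, eval_mul, eval_C, eval_X]; linarith [hx.1]
    rw [hder, eval_comp, hp]
    simp only [eval_mul, eval_pow, eval_X, mul_assoc]
    exact mul_nonneg (pow_nonneg this _) (mul_self_nonneg _)
  · rw [hder, eval_comp, hl1, hp]
    simp [hQ1, sq]
  · rw [hP, ← hint]
    simp [eval_comp, hl1]; ring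
  · rw [hP, ← hint]
    simp [eval_comp, hl0]; ring

theorem endpointConst_pred {n : ℕ} (hn : 0 < n) : endpointConst (n - 1) =
    if Odd n then ((n : ℝ) + 1) ^ 2 / 4 else (n : ℝ) * ((n : ℝ) + 2) / 4 := by
  unfold endpointConst
  split_ifs with h
  · obtain ⟨k, rfl⟩ := h
    rw [show (2 * k + 1 - 1) / 2 = k by omega, show (2 * k + 1 - 1) % 2 = 0 by omega]
    push_cast; ring
  · obtain ⟨k, rfl⟩ := (Nat.not_odd_iff_even.1 h).exists_two_nsmul
    obtain ⟨j, rfl⟩ : ∃ j, k = j + 1 := ⟨k - 1, by simp at hn; omega⟩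
    rw [smul_eq_mul, show (2 * (j + 1) - 1) / 2 = j by omega,
      show (2 * (j + 1) - 1) % 2 = 1 by omega]
    push_cast; ring

/-- Bernstein–Qazi: the sharp Markov constant for monotone polynomials of degree at
most `n` is `(n+1)²/4` for odd `n` and `n(n+2)/4` for even `n`. -/
theorem stmt17 (n : ℕ) (hn : 0 < n) :
    sSup {r : ℝ | ∃ P : Polynomial ℝ, P.natDegree ≤ n ∧ P ≠ 0 ∧
        (∀ x ∈ Set.Icc (-1 : ℝ) 1, 0 ≤ P.derivative.eval x) ∧
        r = LinfNorm (fun x => P.derivative.eval x) (-1) 1 /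
              LinfNorm (fun x => P.eval x) (-1) 1} =
      if Odd n then ((n : ℝ) + 1) ^ 2 / 4 else (n : ℝ) * ((n : ℝ) + 2) / 4 := by
  rw [← endpointConst_pred hn]
  have hK := endpointConst_pos (n - 1)
  apply IsGreatest.csSup_eq
  constructor
  · obtain ⟨P, hdeg, hmono, hd1, h1, hneg⟩ := exists_extremal (n - 1)
    have hP : LinfNorm (fun x => P.eval x) (-1) 1 = endpointConst (n - 1) := by
      refine le_antisymm (LinfNorm_le (by norm_num) fun x hx => ?_) ?_
      · have hm := monotoneOn_eval hmono
        have m1 : P.eval (-1) ≤ P.eval x := hm (by simp) hx hx.1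
        have m2 : P.eval x ≤ P.eval 1 := hm hx (by simp) hx.2
        exact abs_le.2 ⟨by linarith, by linarith⟩
      · rw [← h1]
        exact (le_abs_self _).trans (le_LinfNorm P (by simp))
    have hP' : LinfNorm (fun x => P.derivative.eval x) (-1) 1 = endpointConst (n - 1) ^ 2 := by
      refine le_antisymm ?_ ?_
      · rw [sq]
        nth_rewrite 2 [← hP]
        exact LinfNorm_derivative_le ((natDegree_derivative_le P).trans (by omega)) hmono
      · rw [← hd1]
        exact (le_abs_self _).trans (le_LinfNorm P.derivative (by simp))
    refine ⟨P, by omega, ?_, hmono, ?_⟩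
    · rintro rfl
      rw [eval_zero] at h1
      exact hK.ne h1
    · rw [hP, hP']
      field_simp
  · rintro r ⟨P, hdeg, -, hmono, rfl⟩
    refine div_le_of_le_mul₀ ?_ hK.le
      (LinfNorm_derivative_le ((natDegree_derivative_le P).trans (by omega)) hmono)
    exact (abs_nonneg _).trans (le_LinfNorm P (x := 1) (by simp))
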